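/- If u ∈ L^{p₁,q₁}(Ω) and v ∈ L^{p₂,q₂}(Ω) with 1 ≤ p₁, p₂ ≤ ∞, 1 ≤ q₁, q₂ ≤ ∞, and if 1/p₃ = 1/p₁ + 1/p₂ and 1/q₃ ≤ 1/q₁ + 1/q₂, then the product uv belongs to L^{p₃,q₃}(Ω) and ‖uv‖_{L^{p₃,q₃}} ≤ C ‖u‖_{L^{p₁,q₁}} ‖v‖_{L^{p₂,q₂}} for a constant C depending only on the exponents. -/

import Mathlib

open MeasureTheory ENNReal

/-- The Lorentz quasinorm `‖f‖_{L^{p,q}(μ)}`, defined via the distribution function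
`m(f,t) = μ {x : ‖f x‖ > t}`.  For `q = ∞` it is the weak (Marcinkiewicz) quasinorm
`sup_{t ≥ 0} t · m(f,t)^{1/p}`. -/
noncomputable def lorentzNorm {α : Type*} {E : Type*} [MeasurableSpace α] [NormedAddCommGroup E]
    (μ : Measure α) (f : α → E) (p q : ℝ≥0∞) : ℝ≥0∞ :=
  if q = ∞ then ⨆ t : ℝ, ENNReal.ofReal t * (μ {x | t < ‖f x‖}) ^ (1 / p.toReal)
  else (∫⁻ t in Set.Ioi (0 : ℝ), ENNReal.ofReal t ^ (q.toReal - 1) *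
      (μ {x | t < ‖f x‖}) ^ (q.toReal / p.toReal)) ^ (1 / q.toReal)

/-!
Write `f*` for the decreasing rearrangement of `f`. Since `m(f, t) > y ↔ f*(y) > t`, the layer cake
formula turns `‖f‖_{L^{p,q}}` into `p^{-1/q}` times the `L^q` norm of `y^{1/p} f*(y)` for the
measure `dy / y`. As `{|uv| > st} ⊆ {|u| > s} ∪ {|v| > t}`, one has
`(uv)*(a + b) ≤ u*(a) v*(b)`; for `a = b = y` the dilation `y ↦ 2y` on the left preserves `dy / y`,
and Hölder's inequality for that measure bounds `uv` in `L^{p₃,q}` with `1/q = 1/q₁ + 1/q₂`.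
Finally `L^{p₃,q} ⊆ L^{p₃,q₃}` as `q ≤ q₃`, by interpolation with the weak norm.
-/

open Set

section Rearrangement

variable {α ε : Type*} [MeasurableSpace α] [ENorm ε] {μ : Measure α} {f : α → ε}

/-- The decreasing rearrangement `f*(y) = inf {s | μ {|f| > s} ≤ y}` of `f`, with values in `[0, ∞]`
and defined for all `y ∈ [0, ∞]`. -/
noncomputable def decreasingRearrangement (μ : Measure α) (f : α → ε) (y : ℝ≥0∞) : ℝ≥0∞ :=
  sInf {s | μ {x | s < ‖f x‖ₑ} ≤ y}

lemma decreasingRearrangement_le_iff {y s : ℝ≥0∞} :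
    decreasingRearrangement μ f y ≤ s ↔ μ {x | s < ‖f x‖ₑ} ≤ y := by
  refine ⟨fun h ↦ ?_, fun h ↦ sInf_le h⟩
  obtain ⟨w, hw_anti, hw_lim, hw_mem⟩ :=
    exists_seq_tendsto_sInf (S := {s | μ {x | s < ‖f x‖ₑ} ≤ y}) ⟨∞, by simp⟩ (OrderBot.bddBelow _)
  have h_mono : Monotone fun n ↦ {x | w n < ‖f x‖ₑ} :=
    fun m n hmn x hx ↦ (hw_anti hmn).trans_lt hx
  calc μ {x | s < ‖f x‖ₑ}
      ≤ μ (⋃ n, {x | w n < ‖f x‖ₑ}) := measure_mono fun x hx ↦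
        mem_iUnion.2 (hw_lim.eventually_lt_const (h.trans_lt hx)).exists
    _ = ⨆ n, μ {x | w n < ‖f x‖ₑ} := h_mono.measure_iUnion
    _ ≤ y := iSup_le hw_mem

lemma lt_decreasingRearrangement_iff {y s : ℝ≥0∞} :
    s < decreasingRearrangement μ f y ↔ y < μ {x | s < ‖f x‖ₑ} := by
  simpa only [not_le] using decreasingRearrangement_le_iff.not

lemma measure_decreasingRearrangement_lt_enorm_le (μ : Measure α) (f : α → ε) (y : ℝ≥0∞) :
    μ {x | decreasingRearrangement μ f y < ‖f x‖ₑ} ≤ y :=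
  decreasingRearrangement_le_iff.1 le_rfl

lemma antitone_decreasingRearrangement (μ : Measure α) (f : α → ε) :
    Antitone (decreasingRearrangement μ f) :=
  fun _ _ h ↦ sInf_le_sInf fun _ hs ↦ le_trans hs h

end Rearrangement

lemma decreasingRearrangement_mul_le {α R : Type*} [MeasurableSpace α] [NonUnitalSeminormedRing R]
    (μ : Measure α) (u v : α → R) (a b : ℝ≥0∞) :
    decreasingRearrangement μ (fun x ↦ u x * v x) (a + b) ≤
      decreasingRearrangement μ u a * decreasingRearrangement μ v b := by
  set s := decreasingRearrangement μ u a
  set t := decreasingRearrangement μ v b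
  have h_subset : {x | s * t < ‖u x * v x‖ₑ} ⊆ {x | s < ‖u x‖ₑ} ∪ {x | t < ‖v x‖ₑ} := by
    intro x hx
    by_contra! h
    simp only [mem_union, mem_ofPred_eq, not_or, not_lt] at h
    have h_enorm : ‖u x * v x‖ₑ ≤ ‖u x‖ₑ * ‖v x‖ₑ := by
      simpa only [enorm_eq_nnnorm, ← coe_mul, coe_le_coe] using nnnorm_mul_le (u x) (v x)
    exact (mem_ofPred_eq ▸ hx).not_ge (h_enorm.trans (mul_le_mul' h.1 h.2))
  refine decreasingRearrangement_le_iff.2 ?_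
  calc μ {x | s * t < ‖u x * v x‖ₑ}
      ≤ μ {x | s < ‖u x‖ₑ} + μ {x | t < ‖v x‖ₑ} :=
        (measure_mono h_subset).trans (measure_union_le _ _)
    _ ≤ a + b := add_le_add (measure_decreasingRearrangement_lt_enorm_le μ u a)
        (measure_decreasingRearrangement_lt_enorm_le μ v b)

section RpowMeasure

/-- The measure `t ^ (e - 1) dt` on `(0, ∞)`; for `e = 0` it is the scale-invariant measure
`dt / t`. It is encoded as a measure on `ℝ` that does not charge `(-∞, 0]`. -/
noncomputable def rpowMeasure (e : ℝ) : Measure ℝ :=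
  (volume.restrict (Ioi 0)).withDensity fun t ↦ ENNReal.ofReal t ^ (e - 1)

lemma lintegral_rpowMeasure (e : ℝ) (g : ℝ → ℝ≥0∞) :
    ∫⁻ t, g t ∂rpowMeasure e = ∫⁻ t in Ioi (0 : ℝ), ENNReal.ofReal t ^ (e - 1) * g t :=
  lintegral_withDensity_eq_lintegral_mul_non_measurable _ (by fun_prop)
    (ae_restrict_of_forall_mem measurableSet_Ioi fun _ ht ↦
      (rpow_ne_top_of_ne_zero (ofReal_pos.2 ht).ne' ofReal_ne_top).lt_top) g

lemma ae_rpowMeasure_iff {e : ℝ} {P : ℝ → Prop} :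
    (∀ᵐ t ∂rpowMeasure e, P t) ↔ ∀ᵐ t, 0 < t → P t := by
  rw [rpowMeasure, ae_withDensity_iff (by fun_prop), ae_restrict_iff' measurableSet_Ioi]
  exact Filter.eventually_congr (.of_forall fun t ↦ forall_congr' fun ht ↦
    imp_iff_right (ENNReal.rpow_pos (ofReal_pos.2 ht) ofReal_ne_top).ne')

lemma lintegral_rpow_mul_rpowMeasure (d e : ℝ) (g : ℝ → ℝ≥0∞) :
    ∫⁻ t, ENNReal.ofReal t ^ d * g t ∂rpowMeasure e = ∫⁻ t, g t ∂rpowMeasure (d + e) := by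
  simp only [lintegral_rpowMeasure]
  refine setLIntegral_congr_fun measurableSet_Ioi fun t ht ↦ ?_
  have ht' : ENNReal.ofReal t ≠ 0 := by simpa using ht
  simp only [← mul_assoc, ← ENNReal.rpow_add _ _ ht' ofReal_ne_top]
  ring_nf

lemma rpowMeasure_univ (e : ℝ) : rpowMeasure e univ = ∞ := by
  rw [← lintegral_one, lintegral_rpowMeasure]
  by_contra h
  refine not_integrableOn_Ioi_rpow (e - 1) ⟨by fun_prop, ?_⟩
  rw [hasFiniteIntegral_iff_ofReal (ae_restrict_of_forall_mem measurableSet_Ioi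
    fun t ht ↦ Real.rpow_nonneg (le_of_lt ht) _), lt_top_iff_ne_top]
  convert! h using 1
  refine setLIntegral_congr_fun measurableSet_Ioi fun t ht ↦ ?_
  simp only [mul_one, ofReal_rpow_of_pos (mem_Ioi.1 ht)]

lemma lintegral_rpow_eq_lintegral_meas_lt_rpowMeasure {α : Type*} [MeasurableSpace α]
    {ν : Measure α} {g : α → ℝ≥0∞} (hg : AEMeasurable g ν) {e : ℝ} (he : 0 < e) :
    ∫⁻ y, g y ^ e ∂ν =
      ENNReal.ofReal e * ∫⁻ t, ν {y | ENNReal.ofReal t < g y} ∂rpowMeasure e := by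
  by_cases h_fin : ∀ᵐ y ∂ν, g y ≠ ∞
  · have h_toReal : ∀ᵐ y ∂ν, ENNReal.ofReal ((g y).toReal ^ e) = g y ^ e := by
      filter_upwards [h_fin] with y hy
      rw [← ofReal_rpow_of_nonneg toReal_nonneg he.le, ofReal_toReal hy]
    rw [← lintegral_congr_ae h_toReal, lintegral_rpowMeasure,
      lintegral_rpow_eq_lintegral_meas_lt_mul ν (.of_forall fun _ ↦ toReal_nonneg)
        hg.ennreal_toReal he]
    congr 1
    refine setLIntegral_congr_fun measurableSet_Ioi fun t ht ↦ ?_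
    have h_meas : ν {y | t < (g y).toReal} = ν {y | ENNReal.ofReal t < g y} := by
      refine measure_congr ?_
      filter_upwards [h_fin] with y hy
      exact propext (ofReal_lt_iff_lt_toReal (le_of_lt ht) hy).symm
    simp only [h_meas, ofReal_rpow_of_pos (mem_Ioi.1 ht), mul_comm]
  · have h_lhs : ∫⁻ y, g y ^ e ∂ν = ∞ := by
      contrapose! h_fin
      filter_upwards [ae_lt_top' (hg.pow_const e) h_fin] with y hy h
      simp [h, he] at hy
    have h_pos : ν {y | g y = ∞} ≠ 0 := by simpa [ae_iff] using h_fin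
    have h_rhs : ∫⁻ t, ν {y | ENNReal.ofReal t < g y} ∂rpowMeasure e = ∞ := by
      refine top_le_iff.1 ?_
      calc ∞ = ∫⁻ _, ν {y | g y = ∞} ∂rpowMeasure e := by
            rw [lintegral_const, rpowMeasure_univ, mul_top h_pos]
        _ ≤ ∫⁻ t, ν {y | ENNReal.ofReal t < g y} ∂rpowMeasure e :=
            lintegral_mono fun t ↦ measure_mono fun y (hy : g y = ∞) ↦ by simp [hy]
    rw [h_lhs, h_rhs, mul_top (by simpa using he)]

lemma rpowMeasure_ofReal_lt (c : ℝ≥0∞) {e : ℝ} (he : 0 < e) :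
    rpowMeasure e {t | ENNReal.ofReal t < c} = (ENNReal.ofReal e)⁻¹ * c ^ e := by
  -- The layer cake formula for the constant function `c` on a one-point space.
  have h_dirac := lintegral_rpow_eq_lintegral_meas_lt_rpowMeasure (ν := Measure.dirac ())
    (measurable_const (a := c)).aemeasurable he
  have h_indicator (t : ℝ) : Measure.dirac () {_y | ENNReal.ofReal t < c} =
      {t | ENNReal.ofReal t < c}.indicator 1 t := by
    by_cases ht : ENNReal.ofReal t < c <;> simp [ht]
  have h_meas : MeasurableSet {t | ENNReal.ofReal t < c} :=
    measurableSet_lt (by fun_prop) measurable_const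
  rw [lintegral_dirac, lintegral_congr h_indicator, lintegral_indicator_one h_meas] at h_dirac
  rw [h_dirac, ← mul_assoc, ENNReal.inv_mul_cancel (by simpa using he) ofReal_ne_top, one_mul]

lemma lintegral_comp_mul_left_rpowMeasure_zero {a : ℝ} (ha : 0 < a) {g : ℝ → ℝ≥0∞}
    (hg : Measurable g) :
    ∫⁻ t, g (a * t) ∂rpowMeasure 0 = ∫⁻ t, g t ∂rpowMeasure 0 := by
  have ha' : ENNReal.ofReal a ≠ 0 := by simpa using ha
  set G : ℝ → ℝ≥0∞ := (Ioi 0).indicator fun t ↦ (ENNReal.ofReal t)⁻¹ * g t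
  have hG : Measurable G := by fun_prop (disch := exact measurableSet_Ioi)
  have h_scale (t : ℝ) : (Ioi 0).indicator (fun t ↦ (ENNReal.ofReal t)⁻¹ * g (a * t)) t =
      ENNReal.ofReal a * G (a * t) := by
    by_cases ht : 0 < t
    · simp only [G, indicator_of_mem (mem_Ioi.2 ht), indicator_of_mem (mem_Ioi.2 (mul_pos ha ht)),
        ofReal_mul ha.le, ENNReal.mul_inv (.inl ha') (.inl ofReal_ne_top), ← mul_assoc,
        ENNReal.mul_inv_cancel ha' ofReal_ne_top, one_mul]
    · simp [G, ha, ht]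
  simp only [lintegral_rpowMeasure, zero_sub, rpow_neg_one, ← lintegral_indicator measurableSet_Ioi]
  calc ∫⁻ t, (Ioi 0).indicator (fun t ↦ (ENNReal.ofReal t)⁻¹ * g (a * t)) t
      = ENNReal.ofReal a * ∫⁻ t, G (a * t) := by
        rw [lintegral_congr h_scale, lintegral_const_mul _ (by fun_prop)]
    _ = ∫⁻ t, G t := by
        nth_rw 2 [← Real.smul_map_volume_mul_left ha.ne']
        rw [lintegral_smul_measure, lintegral_map hG (by fun_prop), abs_of_pos ha, smul_eq_mul]

lemma measurePreserving_mul_left_rpowMeasure_zero {a : ℝ} (ha : 0 < a) :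
    MeasurePreserving (a * ·) (rpowMeasure 0) (rpowMeasure 0) := by
  refine ⟨by fun_prop, Measure.ext fun s hs ↦ ?_⟩
  rw [← lintegral_indicator_one hs, ← lintegral_indicator_one hs,
    lintegral_map (by fun_prop) (by fun_prop),
    lintegral_comp_mul_left_rpowMeasure_zero ha (by fun_prop)]

end RpowMeasure

section Holder

variable {α : Type*} [MeasurableSpace α] {μ : Measure α} {f g : α → ℝ≥0∞}

lemma eLpNorm_mul_le_eLpNorm_top_mul_eLpNorm (f : α → ℝ≥0∞) (hg : AEMeasurable g μ) (p : ℝ≥0∞) :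
    eLpNorm (f * g) p μ ≤ eLpNorm f ∞ μ * eLpNorm g p μ := by
  refine eLpNorm_le_mul_eLpNorm_of_ae_le_mul'' _ hg.aestronglyMeasurable ?_
  filter_upwards [enorm_ae_le_eLpNormEssSup f μ] with x hx
  exact mul_le_mul_left hx (g x)

theorem eLpNorm_mul_le_eLpNorm_mul_eLpNorm (hf : AEMeasurable f μ) (hg : AEMeasurable g μ)
    (p q : ℝ≥0∞) {r : ℝ≥0∞} [hpqr : HolderTriple p q r] :
    eLpNorm (f * g) r μ ≤ eLpNorm f p μ * eLpNorm g q μ := by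
  have h_inv := hpqr.inv_add_inv_eq_inv
  obtain rfl | rfl | hp := ENNReal.trichotomy p
  · obtain rfl : r = 0 := by simpa using h_inv.symm
    simp
  · obtain rfl : q = r := by simpa using h_inv
    exact eLpNorm_mul_le_eLpNorm_top_mul_eLpNorm f hg q
  obtain rfl | rfl | hq := ENNReal.trichotomy q
  · obtain rfl : r = 0 := by simpa using h_inv.symm
    simp
  · obtain rfl : p = r := by simpa using h_inv
    simpa only [mul_comm] using eLpNorm_mul_le_eLpNorm_top_mul_eLpNorm g hf p
  have h_real : p.toReal.HolderTriple q.toReal r.toReal := HolderTriple.toReal r hp hq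
  have hr := h_real.pos'
  have h_lintegral := lintegral_Lp_mul_le_Lq_mul_Lr hr h_real.lt h_real.one_div_eq μ hf hg
  rw [toReal_pos_iff] at hp hq hr
  simpa only [eLpNorm_eq_lintegral_rpow_enorm_toReal hp.1.ne' hp.2.ne,
    eLpNorm_eq_lintegral_rpow_enorm_toReal hq.1.ne' hq.2.ne,
    eLpNorm_eq_lintegral_rpow_enorm_toReal hr.1.ne' hr.2.ne, enorm_eq_self] using h_lintegral

end Holder

section Lorentz

lemma setOf_ofReal_lt_enorm {α E : Type*} [SeminormedAddGroup E] {t : ℝ} (ht : 0 ≤ t)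
    (f : α → E) :
    {x | ENNReal.ofReal t < ‖f x‖ₑ} = {x | t < ‖f x‖} := by
  ext x
  rw [mem_ofPred_eq, mem_ofPred_eq, ← ofReal_norm, ofReal_lt_ofReal_iff_of_nonneg ht]

variable {α E : Type*} [MeasurableSpace α] [NormedAddCommGroup E] {μ : Measure α} {f : α → E}
  {p q r : ℝ≥0∞}

lemma lorentzNorm_top_right (μ : Measure α) (f : α → E) (p : ℝ≥0∞) :
    lorentzNorm μ f p ∞ = ⨆ t : ℝ, ENNReal.ofReal t * μ {x | t < ‖f x‖} ^ (1 / p.toReal) :=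
  if_pos rfl

lemma lorentzNorm_eq_lintegral_rpowMeasure (μ : Measure α) (f : α → E) (p : ℝ≥0∞) (hq : q ≠ ∞) :
    lorentzNorm μ f p q =
      (∫⁻ t, μ {x | t < ‖f x‖} ^ (q.toReal / p.toReal) ∂rpowMeasure q.toReal) ^ (1 / q.toReal) := by
  rw [lorentzNorm, if_neg hq, lintegral_rpowMeasure]

lemma mul_measure_rpow_le_lorentzNorm_top_right (μ : Measure α) (f : α → E) (p : ℝ≥0∞) (t : ℝ) :
    ENNReal.ofReal t * μ {x | t < ‖f x‖} ^ (1 / p.toReal) ≤ lorentzNorm μ f p ∞ :=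
  lorentzNorm_top_right μ f p ▸
    le_iSup (fun t : ℝ ↦ ENNReal.ofReal t * μ {x | t < ‖f x‖} ^ (1 / p.toReal)) t

/-- The function `y ↦ y ^ (1 / p) f*(y)`, whose `L^q` norm for the scale-invariant measure `dy / y`
is the Lorentz quasinorm of `f` up to a constant. -/
noncomputable def scaledRearrangement (μ : Measure α) (f : α → E) (p : ℝ≥0∞) (y : ℝ) : ℝ≥0∞ :=
  ENNReal.ofReal y ^ (1 / p.toReal) * decreasingRearrangement μ f (ENNReal.ofReal y)

@[fun_prop]
lemma measurable_scaledRearrangement (μ : Measure α) (f : α → E) (p : ℝ≥0∞) :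
    Measurable (scaledRearrangement μ f p) :=
  Measurable.mul (by fun_prop)
    ((antitone_decreasingRearrangement μ f).measurable.comp measurable_ofReal)

lemma lintegral_scaledRearrangement_rpow (μ : Measure α) (f : α → E)
    (hp₀ : p ≠ 0) (hp : p ≠ ∞) {r : ℝ} (hr : 0 < r) :
    ∫⁻ y, scaledRearrangement μ f p y ^ r ∂rpowMeasure 0 =
      p * ∫⁻ t, μ {x | t < ‖f x‖} ^ (r / p.toReal) ∂rpowMeasure r := by
  have hp_pos : 0 < p.toReal := toReal_pos hp₀ hp
  have h_set {t : ℝ} (ht : 0 < t) :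
      {y | ENNReal.ofReal t < decreasingRearrangement μ f (ENNReal.ofReal y)} =
        {y | ENNReal.ofReal y < μ {x | t < ‖f x‖}} := by
    simp only [lt_decreasingRearrangement_iff, setOf_ofReal_lt_enorm ht.le]
  have h_const : ENNReal.ofReal r * (ENNReal.ofReal (r / p.toReal))⁻¹ = p := by
    rw [ofReal_div_of_pos hp_pos, ofReal_toReal hp, ENNReal.inv_div (.inl hp) (.inl hp₀),
      ENNReal.mul_div_cancel (by simpa using hr) ofReal_ne_top]
  calc ∫⁻ y, scaledRearrangement μ f p y ^ r ∂rpowMeasure 0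
      = ∫⁻ y, ENNReal.ofReal y ^ (r / p.toReal) *
          decreasingRearrangement μ f (ENNReal.ofReal y) ^ r ∂rpowMeasure 0 := by
        simp only [scaledRearrangement, ENNReal.mul_rpow_of_nonneg _ _ hr.le, ← ENNReal.rpow_mul,
          one_div_mul_eq_div]
    _ = ∫⁻ y, decreasingRearrangement μ f (ENNReal.ofReal y) ^ r ∂rpowMeasure (r / p.toReal) := by
        rw [lintegral_rpow_mul_rpowMeasure, add_zero]
    _ = ENNReal.ofReal r * ∫⁻ t, rpowMeasure (r / p.toReal)
          {y | ENNReal.ofReal t < decreasingRearrangement μ f (ENNReal.ofReal y)} ∂rpowMeasure r :=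
        lintegral_rpow_eq_lintegral_meas_lt_rpowMeasure
          ((antitone_decreasingRearrangement μ f).measurable.comp measurable_ofReal).aemeasurable hr
    _ = ENNReal.ofReal r * ∫⁻ t, (ENNReal.ofReal (r / p.toReal))⁻¹ *
          μ {x | t < ‖f x‖} ^ (r / p.toReal) ∂rpowMeasure r := by
        congr 1
        refine lintegral_congr_ae (ae_rpowMeasure_iff.2 (.of_forall fun t ht ↦ ?_))
        simp only [h_set ht, rpowMeasure_ofReal_lt _ (div_pos hr hp_pos)]
    _ = p * ∫⁻ t, μ {x | t < ‖f x‖} ^ (r / p.toReal) ∂rpowMeasure r := by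
        rw [lintegral_const_mul' _ _ (by simpa using div_pos hr hp_pos), ← mul_assoc, h_const]

lemma eLpNorm_top_scaledRearrangement_le_lorentzNorm_top_right (μ : Measure α) (f : α → E)
    (p : ℝ≥0∞) :
    eLpNorm (scaledRearrangement μ f p) ∞ (rpowMeasure 0) ≤ lorentzNorm μ f p ∞ := by
  refine eLpNormEssSup_le_of_ae_enorm_bound (ae_rpowMeasure_iff.2 (.of_forall fun y hy ↦ ?_))
  have h_pow₀ : ENNReal.ofReal y ^ (1 / p.toReal) ≠ 0 :=
    (ENNReal.rpow_pos (ofReal_pos.2 hy) ofReal_ne_top).ne'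
  have h_pow : ENNReal.ofReal y ^ (1 / p.toReal) ≠ ∞ :=
    rpow_ne_top_of_nonneg (by positivity) ofReal_ne_top
  rw [enorm_eq_self, scaledRearrangement, mul_comm,
    ← ENNReal.le_div_iff_mul_le (.inl h_pow₀) (.inl h_pow)]
  refine le_of_forall_lt_imp_le_of_dense fun s hs ↦ ?_
  lift s to NNReal using hs.ne_top
  rw [ENNReal.le_div_iff_mul_le (.inl h_pow₀) (.inl h_pow)]
  have h_meas : ENNReal.ofReal y < μ {x | (s : ℝ) < ‖f x‖} := by
    rwa [← setOf_ofReal_lt_enorm s.coe_nonneg, ← lt_decreasingRearrangement_iff, ofReal_coe_nnreal]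
  calc s * ENNReal.ofReal y ^ (1 / p.toReal)
      ≤ ENNReal.ofReal s * μ {x | (s : ℝ) < ‖f x‖} ^ (1 / p.toReal) := by
        rw [ofReal_coe_nnreal]
        gcongr
    _ ≤ lorentzNorm μ f p ∞ := mul_measure_rpow_le_lorentzNorm_top_right μ f p s

lemma lorentzNorm_top_right_le_eLpNorm_scaledRearrangement (μ : Measure α) (f : α → E)
    (hp₀ : p ≠ 0) (hp : p ≠ ∞) :
    lorentzNorm μ f p ∞ ≤ eLpNorm (scaledRearrangement μ f p) ∞ (rpowMeasure 0) := by
  have hp_pos : 0 < p.toReal := toReal_pos hp₀ hp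
  rw [lorentzNorm_top_right]
  refine iSup_le fun t ↦ ?_
  obtain ht | ht := le_or_gt t 0
  · simp [ofReal_of_nonpos ht]
  set T := ENNReal.ofReal t
  have hT : T ≠ 0 := by simpa [T] using ht
  set K := eLpNorm (scaledRearrangement μ f p) ∞ (rpowMeasure 0)
  have h_bound : ∀ᵐ y : ℝ, 0 < y → scaledRearrangement μ f p y ≤ K :=
    ae_rpowMeasure_iff.1 (enorm_ae_le_eLpNormEssSup (scaledRearrangement μ f p) (rpowMeasure 0))
  have h_le {y : ℝ} (hy : ENNReal.ofReal y < μ {x | t < ‖f x‖})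
      (hyK : scaledRearrangement μ f p y ≤ K) : ENNReal.ofReal y ≤ (K / T) ^ p.toReal := by
    rw [← ENNReal.rpow_inv_le_iff hp_pos, ENNReal.le_div_iff_mul_le (.inl hT) (.inl ofReal_ne_top),
      ← one_div]
    rw [← setOf_ofReal_lt_enorm ht.le, ← lt_decreasingRearrangement_iff] at hy
    exact (mul_le_mul_right hy.le _).trans hyK
  have h_meas : μ {x | t < ‖f x‖} ≤ (K / T) ^ p.toReal := by
    refine le_of_forall_gt_imp_ge_of_dense fun c hc ↦ ?_
    have h_subset : ∀ᵐ y ∂rpowMeasure 1,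
        ENNReal.ofReal y < μ {x | t < ‖f x‖} → ENNReal.ofReal y < c := by
      refine ae_rpowMeasure_iff.2 (h_bound.mono fun y h hy hym ↦ (h_le hym (h hy)).trans_lt hc)
    simpa [rpowMeasure_ofReal_lt] using measure_mono_ae (μ := rpowMeasure 1)
      (s := {y | ENNReal.ofReal y < μ {x | t < ‖f x‖}}) (t := {y | ENNReal.ofReal y < c}) h_subset
  rw [one_div, mul_comm, ← ENNReal.le_div_iff_mul_le (.inl hT) (.inl ofReal_ne_top),
    ENNReal.rpow_inv_le_iff hp_pos]
  exact h_meas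

theorem eLpNorm_scaledRearrangement (μ : Measure α) (f : α → E) (hp₀ : p ≠ 0) (hp : p ≠ ∞)
    (hq₀ : q ≠ 0) :
    eLpNorm (scaledRearrangement μ f p) q (rpowMeasure 0) =
      p ^ (1 / q.toReal) * lorentzNorm μ f p q := by
  obtain rfl | hq := eq_or_ne q ∞
  · simpa using (eLpNorm_top_scaledRearrangement_le_lorentzNorm_top_right μ f p).antisymm
      (lorentzNorm_top_right_le_eLpNorm_scaledRearrangement μ f hp₀ hp)
  · simp only [eLpNorm_eq_lintegral_rpow_enorm_toReal hq₀ hq, enorm_eq_self,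
      lintegral_scaledRearrangement_rpow μ f hp₀ hp (toReal_pos hq₀ hq),
      lorentzNorm_eq_lintegral_rpowMeasure μ f p hq, one_div,
      ENNReal.mul_rpow_of_nonneg _ _ (inv_nonneg.2 (toReal_nonneg (a := q)))]

lemma measurable_measure_lt_norm (μ : Measure α) (f : α → E) :
    Measurable fun t : ℝ ↦ μ {x | t < ‖f x‖} :=
  Antitone.measurable fun _ _ h ↦ measure_mono fun _ hx ↦ h.trans_lt hx

lemma rpow_mul_measure_rpow_le (μ : Measure α) (f : α → E) (p : ℝ≥0∞) {r : ℝ}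
    (hr : 0 < r) (t : ℝ) :
    ENNReal.ofReal t ^ r * μ {x | t < ‖f x‖} ^ (r / p.toReal) ≤
      ENNReal.ofReal r * ∫⁻ s, μ {x | s < ‖f x‖} ^ (r / p.toReal) ∂rpowMeasure r := by
  have hr' : ENNReal.ofReal r ≠ 0 := by simpa using hr
  have h_meas : MeasurableSet {s | ENNReal.ofReal s < ENNReal.ofReal t} :=
    measurableSet_lt (by fun_prop) measurable_const
  calc ENNReal.ofReal t ^ r * μ {x | t < ‖f x‖} ^ (r / p.toReal)
      = ENNReal.ofReal r * ∫⁻ _ in {s | ENNReal.ofReal s < ENNReal.ofReal t},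
          μ {x | t < ‖f x‖} ^ (r / p.toReal) ∂rpowMeasure r := by
        rw [setLIntegral_const, rpowMeasure_ofReal_lt _ hr, mul_left_comm,
          ← mul_assoc (ENNReal.ofReal r), ENNReal.mul_inv_cancel hr' ofReal_ne_top, one_mul,
          mul_comm]
    _ ≤ ENNReal.ofReal r * ∫⁻ s in {s | ENNReal.ofReal s < ENNReal.ofReal t},
          μ {x | s < ‖f x‖} ^ (r / p.toReal) ∂rpowMeasure r := by
        refine mul_le_mul_right (setLIntegral_mono' h_meas fun s hs ↦ ?_) _
        have hst : s < t := (ofReal_lt_ofReal_iff'.1 hs).1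
        gcongr
    _ ≤ ENNReal.ofReal r * ∫⁻ s, μ {x | s < ‖f x‖} ^ (r / p.toReal) ∂rpowMeasure r := by
        exact mul_le_mul_right (setLIntegral_le_lintegral _ _) _

theorem lorentzNorm_top_right_le_mul_lorentzNorm (μ : Measure α) (f : α → E) (p : ℝ≥0∞)
    (hq₀ : q ≠ 0) :
    lorentzNorm μ f p ∞ ≤ q ^ (1 / q.toReal) * lorentzNorm μ f p q := by
  obtain rfl | hq := eq_or_ne q ∞
  · simp
  have hq_pos : 0 < q.toReal := toReal_pos hq₀ hq
  rw [lorentzNorm_top_right, lorentzNorm_eq_lintegral_rpowMeasure μ f p hq,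
    ← ENNReal.mul_rpow_of_nonneg _ _ (by positivity)]
  refine iSup_le fun t ↦ ?_
  rw [one_div q.toReal, ENNReal.le_rpow_inv_iff hq_pos,
    ENNReal.mul_rpow_of_nonneg _ _ hq_pos.le, ← ENNReal.rpow_mul, one_div_mul_eq_div]
  simpa only [ofReal_toReal hq] using rpow_mul_measure_rpow_le μ f p hq_pos t

lemma lorentzNorm_le_lorentzNorm_top_right_rpow_mul_rpow (μ : Measure α) (f : α → E)
    (p : ℝ≥0∞) (hq₀ : q ≠ 0) (hqr : q ≤ r) (hr : r ≠ ∞) :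
    lorentzNorm μ f p r ≤ lorentzNorm μ f p ∞ ^ (1 - q.toReal / r.toReal) *
      lorentzNorm μ f p q ^ (q.toReal / r.toReal) := by
  have hq : q ≠ ∞ := ne_top_of_le_ne_top hr hqr
  have hq_pos : 0 < q.toReal := toReal_pos hq₀ hq
  have hqr' : q.toReal ≤ r.toReal := toReal_mono hr hqr
  have hr_pos : 0 < r.toReal := hq_pos.trans_le hqr'
  have h_pointwise (t : ℝ) :
      ENNReal.ofReal t ^ (r.toReal - q.toReal) * μ {x | t < ‖f x‖} ^ (r.toReal / p.toReal) ≤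
        lorentzNorm μ f p ∞ ^ (r.toReal - q.toReal) *
          μ {x | t < ‖f x‖} ^ (q.toReal / p.toReal) := by
    have h_split : r.toReal / p.toReal =
        1 / p.toReal * (r.toReal - q.toReal) + q.toReal / p.toReal := by ring
    rw [h_split, ENNReal.rpow_add_of_nonneg _ _ (mul_nonneg (by positivity) (sub_nonneg.2 hqr'))
      (by positivity), ENNReal.rpow_mul, ← mul_assoc,
      ← ENNReal.mul_rpow_of_nonneg _ _ (sub_nonneg.2 hqr')]
    gcongr
    exact mul_measure_rpow_le_lorentzNorm_top_right μ f p t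
  have h_lintegral : ∫⁻ t, μ {x | t < ‖f x‖} ^ (r.toReal / p.toReal) ∂rpowMeasure r.toReal ≤
      lorentzNorm μ f p ∞ ^ (r.toReal - q.toReal) * lorentzNorm μ f p q ^ q.toReal := by
    rw [lorentzNorm_eq_lintegral_rpowMeasure μ f p hq, one_div, ENNReal.rpow_inv_rpow hq_pos.ne',
      ← lintegral_const_mul _ ((measurable_measure_lt_norm μ f).pow_const _),
      ← sub_add_cancel r.toReal q.toReal, ← lintegral_rpow_mul_rpowMeasure, sub_add_cancel]
    exact lintegral_mono h_pointwise
  calc lorentzNorm μ f p r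
      ≤ (lorentzNorm μ f p ∞ ^ (r.toReal - q.toReal) * lorentzNorm μ f p q ^ q.toReal) ^
          (1 / r.toReal) := by
        rw [lorentzNorm_eq_lintegral_rpowMeasure μ f p hr]
        gcongr
    _ = _ := by
        rw [ENNReal.mul_rpow_of_nonneg _ _ (by positivity), ← ENNReal.rpow_mul, ← ENNReal.rpow_mul,
          mul_one_div, mul_one_div, sub_div, div_self hr_pos.ne']

lemma rpow_one_div_sub_one_div_ne_top (hq₀ : q ≠ 0) (hqr : q ≤ r) :
    q ^ (1 / q.toReal - 1 / r.toReal) ≠ ∞ := by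
  obtain rfl | hq := eq_or_ne q ∞
  · simp [top_le_iff.1 hqr]
  · exact ENNReal.rpow_ne_top_of_ne_zero hq₀ hq

theorem lorentzNorm_le_mul_lorentzNorm_of_le (μ : Measure α) (f : α → E) (p : ℝ≥0∞) (hq₀ : q ≠ 0)
    (hqr : q ≤ r) :
    lorentzNorm μ f p r ≤ q ^ (1 / q.toReal - 1 / r.toReal) * lorentzNorm μ f p q := by
  obtain rfl | hr := eq_or_ne r ∞
  · simpa using lorentzNorm_top_right_le_mul_lorentzNorm μ f p hq₀
  have hq_pos : 0 < q.toReal := toReal_pos hq₀ (ne_top_of_le_ne_top hr hqr)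
  have hr_pos : 0 < r.toReal := hq_pos.trans_le (toReal_mono hr hqr)
  have h_exp : 0 ≤ 1 - q.toReal / r.toReal :=
    sub_nonneg.2 ((div_le_one hr_pos).2 (toReal_mono hr hqr))
  calc lorentzNorm μ f p r
      ≤ lorentzNorm μ f p ∞ ^ (1 - q.toReal / r.toReal) *
          lorentzNorm μ f p q ^ (q.toReal / r.toReal) :=
        lorentzNorm_le_lorentzNorm_top_right_rpow_mul_rpow μ f p hq₀ hqr hr
    _ ≤ (q ^ (1 / q.toReal) * lorentzNorm μ f p q) ^ (1 - q.toReal / r.toReal) *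
          lorentzNorm μ f p q ^ (q.toReal / r.toReal) := by
        gcongr
        exact lorentzNorm_top_right_le_mul_lorentzNorm μ f p hq₀
    _ = q ^ (1 / q.toReal - 1 / r.toReal) * lorentzNorm μ f p q := by
        rw [ENNReal.mul_rpow_of_nonneg _ _ h_exp, mul_assoc,
          ← ENNReal.rpow_add_of_nonneg _ _ h_exp (by positivity), sub_add_cancel, ENNReal.rpow_one,
          ← ENNReal.rpow_mul]
        congr 2
        field_simp

-- For `p = ∞` the exponent `1 / p.toReal` is the junk value `1 / 0 = 0`, so every power of
-- `m(f, t)` in the definition is `1`.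
lemma lorentzNorm_top_left (μ : Measure α) (f : α → E) (hq₀ : q ≠ 0) :
    lorentzNorm μ f ∞ q = ∞ := by
  obtain rfl | hq := eq_or_ne q ∞
  · refine ENNReal.eq_top_of_forall_nnreal_le fun s ↦ ?_
    simpa using mul_measure_rpow_le_lorentzNorm_top_right μ f ∞ s
  · have hq_pos : 0 < q.toReal := toReal_pos hq₀ hq
    simp [lorentzNorm_eq_lintegral_rpowMeasure μ f ∞ hq, rpowMeasure_univ, hq_pos]

end Lorentz

section ONeil

variable {α R : Type*} [MeasurableSpace α] [NonUnitalNormedRing R] {p₁ p₂ p₃ q₁ q₂ q₃ : ℝ≥0∞}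

lemma scaledRearrangement_mul_le (μ : Measure α) (u v : α → R)
    (hp : 1 / p₃.toReal = 1 / p₁.toReal + 1 / p₂.toReal) {y : ℝ} (hy : 0 ≤ y) :
    scaledRearrangement μ (fun x ↦ u x * v x) p₃ (2 * y) ≤
      2 ^ (1 / p₃.toReal) * (scaledRearrangement μ u p₁ y * scaledRearrangement μ v p₂ y) := by
  have h_two : ENNReal.ofReal (2 * y) = ENNReal.ofReal y + ENNReal.ofReal y := by
    rw [two_mul, ofReal_add hy hy]
  have h_pow : ENNReal.ofReal (2 * y) ^ (1 / p₃.toReal) = 2 ^ (1 / p₃.toReal) *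
      (ENNReal.ofReal y ^ (1 / p₁.toReal) * ENNReal.ofReal y ^ (1 / p₂.toReal)) := by
    rw [ofReal_mul zero_le_two, ofReal_ofNat, ENNReal.mul_rpow_of_nonneg _ _ (by positivity),
      ← ENNReal.rpow_add_of_nonneg _ _ (by positivity) (by positivity), hp]
  calc scaledRearrangement μ (fun x ↦ u x * v x) p₃ (2 * y)
      ≤ ENNReal.ofReal (2 * y) ^ (1 / p₃.toReal) *
          (decreasingRearrangement μ u (ENNReal.ofReal y) *
            decreasingRearrangement μ v (ENNReal.ofReal y)) := by
        rw [scaledRearrangement, h_two]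
        gcongr
        exact decreasingRearrangement_mul_le μ u v _ _
    _ = _ := by
        rw [h_pow, scaledRearrangement, scaledRearrangement]
        ring

lemma eLpNorm_scaledRearrangement_mul_le (μ : Measure α) (u v : α → R)
    (hp : 1 / p₃.toReal = 1 / p₁.toReal + 1 / p₂.toReal) [HolderTriple q₁ q₂ q₃] :
    eLpNorm (scaledRearrangement μ (fun x ↦ u x * v x) p₃) q₃ (rpowMeasure 0) ≤
      2 ^ (1 / p₃.toReal) * (eLpNorm (scaledRearrangement μ u p₁) q₁ (rpowMeasure 0) *
        eLpNorm (scaledRearrangement μ v p₂) q₂ (rpowMeasure 0)) := by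
  rw [← eLpNorm_comp_measurePreserving (by fun_prop)
    (measurePreserving_mul_left_rpowMeasure_zero two_pos)]
  refine (eLpNorm_le_mul_eLpNorm_of_ae_le_mul'' (c := 2 ^ (1 / p₃.toReal))
    (g := scaledRearrangement μ u p₁ * scaledRearrangement μ v p₂) q₃ (by fun_prop) ?_).trans ?_
  · exact ae_rpowMeasure_iff.2 (.of_forall fun y hy ↦
      scaledRearrangement_mul_le μ u v hp (le_of_lt hy))
  · gcongr
    exact eLpNorm_mul_le_eLpNorm_mul_eLpNorm (by fun_prop) (by fun_prop) q₁ q₂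

theorem lorentzNorm_mul_le (μ : Measure α) (u v : α → R) (hp₁₀ : p₁ ≠ 0) (hp₁ : p₁ ≠ ∞)
    (hp₂₀ : p₂ ≠ 0) (hp₂ : p₂ ≠ ∞) (hq₁ : q₁ ≠ 0) (hq₂ : q₂ ≠ 0)
    [HolderTriple p₁ p₂ p₃] [hq₃ : HolderTriple q₁ q₂ q₃] :
    lorentzNorm μ (fun x ↦ u x * v x) p₃ q₃ ≤
      2 ^ (1 / p₃.toReal) * p₁ ^ (1 / q₁.toReal) * p₂ ^ (1 / q₂.toReal) / p₃ ^ (1 / q₃.toReal) *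
        lorentzNorm μ u p₁ q₁ * lorentzNorm μ v p₂ q₂ := by
  have h_real := HolderTriple.toReal p₃ (toReal_pos hp₁₀ hp₁) (toReal_pos hp₂₀ hp₂)
  have ⟨hp₃₀, hp₃_top⟩ := toReal_pos_iff.1 h_real.pos'
  have hq₃₀ : q₃ ≠ 0 := by
    rw [← ENNReal.inv_ne_top, ← hq₃.inv_add_inv_eq_inv]
    simp [hq₁, hq₂]
  have h_scaled := eLpNorm_scaledRearrangement_mul_le (q₁ := q₁) (q₂ := q₂) (q₃ := q₃) μ u v
    h_real.one_div_eq
  rw [eLpNorm_scaledRearrangement μ _ hp₃₀.ne' hp₃_top.ne hq₃₀,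
    eLpNorm_scaledRearrangement μ u hp₁₀ hp₁ hq₁,
    eLpNorm_scaledRearrangement μ v hp₂₀ hp₂ hq₂] at h_scaled
  rw [← ENNReal.mul_div_right_comm, ← ENNReal.mul_div_right_comm,
    ENNReal.le_div_iff_mul_le, mul_comm]
  · exact h_scaled.trans_eq (by ring)
  · simp [hp₃₀.ne', hp₃_top.ne]
  · simp [hp₃₀.ne', hp₃_top.ne]

/-- The constant in O'Neil's inequality: the one for the exponent `q` with `1/q = 1/q₁ + 1/q₂`,
times that of the embedding `L^{p₃,q} ⊆ L^{p₃,q₃}`. -/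
noncomputable def oneilConstant (p₁ p₂ p₃ q₁ q₂ q₃ : ℝ≥0∞) : ℝ≥0∞ :=
  let q := (q₁⁻¹ + q₂⁻¹)⁻¹
  q ^ (1 / q.toReal - 1 / q₃.toReal) *
    (2 ^ (1 / p₃.toReal) * p₁ ^ (1 / q₁.toReal) * p₂ ^ (1 / q₂.toReal) / p₃ ^ (1 / q.toReal))

lemma oneilConstant_ne_top (hp₁₀ : p₁ ≠ 0) (hp₁ : p₁ ≠ ∞) (hp₂₀ : p₂ ≠ 0) (hp₂ : p₂ ≠ ∞)
    (hq₁ : q₁ ≠ 0) (hq₂ : q₂ ≠ 0) [HolderTriple p₁ p₂ p₃] (hq : q₃⁻¹ ≤ q₁⁻¹ + q₂⁻¹) :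
    oneilConstant p₁ p₂ p₃ q₁ q₂ q₃ ≠ ∞ := by
  have h_real := HolderTriple.toReal p₃ (toReal_pos hp₁₀ hp₁) (toReal_pos hp₂₀ hp₂)
  have ⟨hp₃₀, hp₃_top⟩ := toReal_pos_iff.1 h_real.pos'
  have h_embed := rpow_one_div_sub_one_div_ne_top (q := (q₁⁻¹ + q₂⁻¹)⁻¹) (by simp [hq₁, hq₂])
    (ENNReal.inv_le_iff_inv_le.1 hq)
  refine mul_ne_top h_embed (div_ne_top (mul_ne_top (mul_ne_top ?_ ?_) ?_) ?_)
  · simp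
  · simp [hp₁]
  · simp [hp₂]
  · simp [hp₃₀.ne', hp₃_top.ne]

theorem lorentzNorm_mul_le_of_inv_le (μ : Measure α) (u v : α → R) (hp₁₀ : p₁ ≠ 0) (hp₁ : p₁ ≠ ∞)
    (hp₂₀ : p₂ ≠ 0) (hp₂ : p₂ ≠ ∞) (hq₁ : q₁ ≠ 0) (hq₂ : q₂ ≠ 0)
    [HolderTriple p₁ p₂ p₃] (hq : q₃⁻¹ ≤ q₁⁻¹ + q₂⁻¹) :
    lorentzNorm μ (fun x ↦ u x * v x) p₃ q₃ ≤
      oneilConstant p₁ p₂ p₃ q₁ q₂ q₃ * lorentzNorm μ u p₁ q₁ * lorentzNorm μ v p₂ q₂ := by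
  set q := (q₁⁻¹ + q₂⁻¹)⁻¹ with hq_def
  have : HolderTriple q₁ q₂ q := .of q₁ q₂
  have hq₀ : q ≠ 0 := by simp [q, hq₁, hq₂]
  calc lorentzNorm μ (fun x ↦ u x * v x) p₃ q₃
      ≤ q ^ (1 / q.toReal - 1 / q₃.toReal) * lorentzNorm μ (fun x ↦ u x * v x) p₃ q :=
        lorentzNorm_le_mul_lorentzNorm_of_le μ _ p₃ hq₀ (ENNReal.inv_le_iff_inv_le.1 hq)
    _ ≤ q ^ (1 / q.toReal - 1 / q₃.toReal) * (2 ^ (1 / p₃.toReal) * p₁ ^ (1 / q₁.toReal) *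
          p₂ ^ (1 / q₂.toReal) / p₃ ^ (1 / q.toReal) *
            lorentzNorm μ u p₁ q₁ * lorentzNorm μ v p₂ q₂) := by
        gcongr
        exact lorentzNorm_mul_le μ u v hp₁₀ hp₁ hp₂₀ hp₂ hq₁ hq₂
    _ = oneilConstant p₁ p₂ p₃ q₁ q₂ q₃ * lorentzNorm μ u p₁ q₁ * lorentzNorm μ v p₂ q₂ := by
        simp only [oneilConstant, ← hq_def, mul_assoc]

end ONeil

theorem oneil_holder_lorentz_general (p₁ p₂ p₃ q₁ q₂ q₃ : ℝ≥0∞)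
    (hp₁ : p₁ ≠ 0) (hp₂ : p₂ ≠ 0) (hq₁ : q₁ ≠ 0) (hq₂ : q₂ ≠ 0)
    (hp : 1 / p₃ = 1 / p₁ + 1 / p₂) (hq : 1 / q₃ ≤ 1 / q₁ + 1 / q₂) :
    ∃ C : ℝ, 0 < C ∧ ∀ (α : Type*) (R : Type*) (_ : MeasurableSpace α)
      (_ : NonUnitalNormedRing R) (μ : Measure α) (u v : α → R),
      lorentzNorm μ u p₁ q₁ < ∞ → lorentzNorm μ v p₂ q₂ < ∞ →
      lorentzNorm μ (fun x => u x * v x) p₃ q₃ < ∞ ∧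
      lorentzNorm μ (fun x => u x * v x) p₃ q₃ ≤
        ENNReal.ofReal C * lorentzNorm μ u p₁ q₁ * lorentzNorm μ v p₂ q₂ := by
  simp only [one_div] at hp hq
  have : HolderTriple p₁ p₂ p₃ := ⟨hp.symm⟩
  set K := oneilConstant p₁ p₂ p₃ q₁ q₂ q₃
  refine ⟨K.toReal + 1, by positivity, fun α R _ _ μ u v hu hv ↦ ?_⟩
  have hp₁_top : p₁ ≠ ∞ := fun h ↦ hu.ne (h ▸ lorentzNorm_top_left μ u hq₁)
  have hp₂_top : p₂ ≠ ∞ := fun h ↦ hv.ne (h ▸ lorentzNorm_top_left μ v hq₂)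
  have hK : K ≤ ENNReal.ofReal (K.toReal + 1) :=
    (le_ofReal_iff_toReal_le (oneilConstant_ne_top hp₁ hp₁_top hp₂ hp₂_top hq₁ hq₂ hq)
      (by positivity)).2 (by linarith)
  have h_le : lorentzNorm μ (fun x ↦ u x * v x) p₃ q₃ ≤
      ENNReal.ofReal (K.toReal + 1) * lorentzNorm μ u p₁ q₁ * lorentzNorm μ v p₂ q₂ :=
    (lorentzNorm_mul_le_of_inv_le μ u v hp₁ hp₁_top hp₂ hp₂_top hq₁ hq₂ hq).trans (by gcongr)
  exact ⟨h_le.trans_lt (mul_lt_top (mul_lt_top ofReal_lt_top hu) hv), h_le⟩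

/-- **O'Neil's Hölder inequality in Lorentz spaces.**  If `u ∈ L^{p₁,q₁}(Ω)` and
`v ∈ L^{p₂,q₂}(Ω)` with `1 ≤ pᵢ, qᵢ ≤ ∞`, `1/p₃ = 1/p₁ + 1/p₂` and `1/q₃ ≤ 1/q₁ + 1/q₂`,
then `uv ∈ L^{p₃,q₃}(Ω)` with `‖uv‖_{L^{p₃,q₃}} ≤ C ‖u‖_{L^{p₁,q₁}} ‖v‖_{L^{p₂,q₂}}`,
where `C` depends only on the exponents. -/
theorem oneil_holder_lorentz (p₁ p₂ p₃ q₁ q₂ q₃ : ℝ≥0∞)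
    (hp₁ : 1 ≤ p₁) (hp₂ : 1 ≤ p₂) (hq₁ : 1 ≤ q₁) (hq₂ : 1 ≤ q₂)
    (hp : 1 / p₃ = 1 / p₁ + 1 / p₂) (hq : 1 / q₃ ≤ 1 / q₁ + 1 / q₂) :
    ∃ C : ℝ, 0 < C ∧ ∀ (α : Type) (_ : MeasurableSpace α) (μ : Measure α) (u v : α → ℝ),
      Measurable u → Measurable v →
      lorentzNorm μ u p₁ q₁ < ∞ → lorentzNorm μ v p₂ q₂ < ∞ →
      lorentzNorm μ (fun x => u x * v x) p₃ q₃ < ∞ ∧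
      lorentzNorm μ (fun x => u x * v x) p₃ q₃ ≤
        ENNReal.ofReal C * lorentzNorm μ u p₁ q₁ * lorentzNorm μ v p₂ q₂ := by
  obtain ⟨C, hC, h⟩ := oneil_holder_lorentz_general p₁ p₂ p₃ q₁ q₂ q₃ (one_pos.trans_le hp₁).ne'
    (one_pos.trans_le hp₂).ne' (one_pos.trans_le hq₁).ne' (one_pos.trans_le hq₂).ne' hp hq
  exact ⟨C, hC, fun α _ μ u v _ _ ↦ h α ℝ _ _ μ u v⟩
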